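/- Let f : (0,∞) → ℂ be smooth, and suppose: (1) for every N ∈ ℕ there are C, ε > 0 with |f^{(N)}(t)| ≤ C e^{-εt} for t ≥ 1; (2) there are expansion data (α, k, a) for f which can be differentiated, i.e. for all N ∈ ℕ and j₀ ∈ ℕ there is C with |dⁿ/dtⁿ [f(t) − ∑_{j<j₀} ∑_{i≤k_j} a_{j i} t^{α_j} (log t)^i]|_{n=N} ≤ C t^{Re α_{j₀} − N} (1 + |log t|^{k_{j₀}}) for 0 < t ≤ 1. Then G(s) := ∫₀^∞ t^{(s-1)/2} f(t) dt converges absolutely and is holomorphic for Re s > −2 Re α₀ − 1, there is a meromorphic function G̃ on ℂ agreeing with G there and holomorphic off {−2α_j − 1 : j ∈ ℕ}, and for all real numbers A ≤ B and every N > 0 there exist s₀, C > 0 such that every s ∈ ℂ with A ≤ Re s ≤ B and |Im s| ≥ s₀ satisfies: G̃ is holomorphic at s and |G̃(s)| ≤ C |s|^{−N}. -/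

import Mathlib

/-!
Put `z = (s + 1) / 2`, so that `G(s)` is the Mellin transform `M f (z) = ∫₀^∞ t^(z-1) f(t) dt`, and
let `θ = t d/dt`. Integration by parts gives `M (p(θ) g) (z) = p(-z) M g (z)` for every polynomial
`p`, as long as `g` and its derivatives decay well enough at `0` and `∞`
(`SmoothPos.mellin_aeval_euler`).

Let `ℓ_J = ∏_{j<J} (X - α_j)^(k_j+1)`. Since `θ - α` lowers the degree in `log t` of
`t^α (log t)^i`, the operator `ℓ_J(θ)` kills the first `J` terms of the expansion
(`Expansion.aeval_ann_partialSum`). Hence `ℓ_J(θ) f = ℓ_J(θ) (f - partial sum)` is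
`O(t^(Re α_J - δ))` at `0` for every `δ > 0`, with `N`-th derivative `O(t^(Re α_J - δ - N))`, and its
Mellin transform is holomorphic for `Re z > -Re α_J`. There the quotient
`M (ℓ_J(θ) f) (z) / ℓ_J(-z)` continues `M f` meromorphically, with poles among the points `-α_j`, `j < J`. The quotients for different `J` agree
exactly on common half-planes, because the additional factors of `ℓ_{J'}(-z)`, `J' > J`, do not
vanish for `Re z > -Re α_J` (`Expansion.cont_eq_of_le`); so they glue.

For the decay, apply `(-2X - 1)^n` of `θ` on top of `ℓ_J(θ)`: since `2z - 1 = s`, this multiplies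
the transform by `s^n`, while the result is still the Mellin transform of an admissible function and
so is bounded on vertical strips; and `|ℓ_J(-z)| ≥ 1` once `|Im z|` is large
(`Expansion.exists_decay_cont`).
-/

open MeasureTheory Set Filter

section

open Topology Asymptotics Polynomial

/-! ### Smooth functions on the half-line and the Euler operator -/

/-- The space of functions `ℝ → ℂ` that are smooth on `(0,∞)` and vanish on `(-∞,0]`. The vanishing
makes an element determined by its values on `(0,∞)`. -/
def SmoothPos : Submodule ℂ (ℝ → ℂ) where
  carrier := {g | ContDiffOn ℝ (⊤ : ℕ∞) g (Ioi 0) ∧ ∀ t ≤ 0, g t = 0}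
  add_mem' := fun ha hb => ⟨ha.1.add hb.1, fun t ht => by simp [ha.2 t ht, hb.2 t ht]⟩
  zero_mem' := ⟨contDiffOn_const, fun _ _ => rfl⟩
  smul_mem' := fun c _ ha => ⟨ha.1.const_smul c, fun t ht => by simp [ha.2 t ht]⟩

namespace SmoothPos

theorem ext_pos {g h : SmoothPos} (H : ∀ t, 0 < t → g.1 t = h.1 t) : g = h := by
  ext t
  rcases lt_or_ge 0 t with ht | ht
  · exact H t ht
  · rw [g.2.2 t ht, h.2.2 t ht]

theorem contDiffOn (g : SmoothPos) : ContDiffOn ℝ (⊤ : ℕ∞) g.1 (Ioi 0) := g.2.1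

/-- Extension by zero to the left of a function smooth on `(0,∞)`. -/
noncomputable def mk (g : ℝ → ℂ) (hg : ContDiffOn ℝ (⊤ : ℕ∞) g (Ioi 0)) : SmoothPos :=
  ⟨(Ioi 0).indicator g, hg.congr fun t ht => by simp [indicator_of_mem ht],
    fun t ht => by simp [ht]⟩

theorem mk_apply {g : ℝ → ℂ} (hg : ContDiffOn ℝ (⊤ : ℕ∞) g (Ioi 0)) {t : ℝ} (ht : 0 < t) :
    (mk g hg).1 t = g t := by simp [mk, ht]

theorem hasDerivAt (g : SmoothPos) {t : ℝ} (ht : 0 < t) :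
    HasDerivAt g.1 (derivWithin g.1 (Ioi 0) t) t := by
  have h := ((contDiffOn g).differentiableOn (by simp)) t ht
  exact h.hasDerivWithinAt.hasDerivAt (Ioi_mem_nhds ht)

theorem contDiffOn_derivWithin (g : SmoothPos) :
    ContDiffOn ℝ (⊤ : ℕ∞) (derivWithin g.1 (Ioi 0)) (Ioi 0) :=
  (contDiffOn g).derivWithin (uniqueDiffOn_Ioi 0) (by simp)

theorem contDiffOn_mul_derivWithin (g : SmoothPos) :
    ContDiffOn ℝ (⊤ : ℕ∞) (fun t : ℝ => (t : ℂ) * derivWithin g.1 (Ioi 0) t) (Ioi 0) :=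
  ContDiffOn.mul Complex.ofRealCLM.contDiff.contDiffOn (contDiffOn_derivWithin g)

/-- The Euler operator `θ = t d/dt`. -/
noncomputable def euler : Module.End ℂ SmoothPos where
  toFun g := mk _ (contDiffOn_mul_derivWithin g)
  map_add' g h := ext_pos fun t ht => by
    have := ((hasDerivAt g ht).add (hasDerivAt h ht)).hasDerivWithinAt (s := Ioi 0) |>.derivWithin
      (uniqueDiffOn_Ioi 0 t ht)
    rw [mk_apply _ ht]
    simp only [Submodule.coe_add, Pi.add_apply]
    rw [mk_apply _ ht, mk_apply _ ht, this]
    ring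
  map_smul' c g := ext_pos fun t ht => by
    have := ((hasDerivAt g ht).const_smul c).hasDerivWithinAt (s := Ioi 0) |>.derivWithin
      (uniqueDiffOn_Ioi 0 t ht)
    rw [mk_apply _ ht]
    simp only [Submodule.coe_smul, Pi.smul_apply]
    rw [mk_apply _ ht, this, RingHom.id_apply, smul_eq_mul, smul_eq_mul]
    ring

theorem euler_apply (g : SmoothPos) {t : ℝ} (ht : 0 < t) :
    (euler g).1 t = t * derivWithin g.1 (Ioi 0) t :=
  mk_apply (contDiffOn_mul_derivWithin g) ht

theorem euler_apply_of_hasDerivAt (g : SmoothPos) {t : ℝ} (ht : 0 < t) {d : ℂ}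
    (h : HasDerivAt g.1 d t) : (euler g).1 t = t * d := by
  rw [euler_apply g ht, h.hasDerivWithinAt.derivWithin (uniqueDiffOn_Ioi 0 t ht)]

/-- The Leibniz rule `(t g')^(N) = t g^(N+1) + N g^(N)`. -/
theorem iteratedDerivWithin_euler (g : SmoothPos) (N : ℕ) {t : ℝ} (ht : 0 < t) :
    iteratedDerivWithin N (euler g).1 (Ioi 0) t =
      t * iteratedDerivWithin (N + 1) g.1 (Ioi 0) t + N * iteratedDerivWithin N g.1 (Ioi 0) t := by
  induction N generalizing t with
  | zero => simp [iteratedDerivWithin_one, euler_apply g ht]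
  | succ N ih =>
    have hd : ∀ M : ℕ, HasDerivWithinAt (iteratedDerivWithin M g.1 (Ioi 0))
        (iteratedDerivWithin (M + 1) g.1 (Ioi 0) t) (Ioi 0) t := fun M => by
      rw [iteratedDerivWithin_succ]
      exact (((contDiffOn g).differentiableOn_iteratedDerivWithin (m := M)
        (by exact_mod_cast ENat.natCast_lt_top M) (uniqueDiffOn_Ioi 0)) t ht).hasDerivWithinAt
    have hc : EqOn (iteratedDerivWithin N (euler g).1 (Ioi 0)) (fun t : ℝ =>
        (t : ℂ) * iteratedDerivWithin (N + 1) g.1 (Ioi 0) t +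
          N * iteratedDerivWithin N g.1 (Ioi 0) t) (Ioi 0) := fun x hx => ih hx
    rw [iteratedDerivWithin_succ, derivWithin_congr hc (ih ht)]
    have h1 : HasDerivWithinAt (fun x : ℝ => (x : ℂ)) 1 (Ioi 0) t :=
      Complex.ofRealCLM.hasDerivAt.hasDerivWithinAt
    refine (((h1.mul (hd (N + 1))).add ((hd N).const_mul (N : ℂ))).derivWithin
      (uniqueDiffOn_Ioi 0 t ht)).trans ?_
    push_cast
    ring

/-! ### Decay classes -/

/-- The functions whose derivatives of each order `N` are `O(t^(b-N))` along the filter `l`, which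
is meant to be `𝓝[>] 0` or `atTop`. -/
def symbols (l : Filter ℝ) (hl : ∀ᶠ t in l, 0 < t) (b : ℝ) : Submodule ℂ SmoothPos where
  carrier := {g | ∀ N : ℕ, iteratedDerivWithin N g.1 (Ioi 0) =O[l] fun t : ℝ => t ^ (b - N)}
  add_mem' := fun {g h} hg hh N => ((hg N).add (hh N)).congr' (hl.mono fun t ht => by
    exact (iteratedDerivWithin_add ht (uniqueDiffOn_Ioi 0)
      ((contDiffOn g t ht).of_le (by exact_mod_cast le_top))
      ((contDiffOn h t ht).of_le (by exact_mod_cast le_top))).symm) .rfl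
  zero_mem' := fun N => by
    refine (isBigO_zero _ l).congr_left fun t => ?_
    exact (iteratedDerivWithin_const_zero (𝕜 := ℝ)).symm
  smul_mem' := fun c g hg N => ((hg N).const_smul_left c).congr' (hl.mono fun t ht => by
    exact (iteratedDerivWithin_const_smul ht (uniqueDiffOn_Ioi 0) c
      ((contDiffOn g t ht).of_le (by exact_mod_cast le_top))).symm) .rfl

theorem euler_mem {l : Filter ℝ} {hl : ∀ᶠ t in l, 0 < t} {b : ℝ} {g : SmoothPos}
    (hg : g ∈ symbols l hl b) : euler g ∈ symbols l hl b := fun N => by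
  have h1 : (fun t : ℝ => (t : ℂ) * iteratedDerivWithin (N + 1) g.1 (Ioi 0) t) =O[l]
      fun t : ℝ => t ^ (b - N) := by
    have h0 : (fun t : ℝ => (t : ℂ)) =O[l] (fun t : ℝ => t) :=
      isBigO_of_le _ fun t => by simp
    refine (h0.mul (hg (N + 1))).congr' .rfl (hl.mono fun t ht => ?_)
    have : t * t ^ (b - (N + 1 : ℕ)) = t ^ (1 : ℝ) * t ^ (b - (N + 1 : ℕ)) := by simp
    simp only [this, ← Real.rpow_add ht]
    congr 1
    push_cast
    ring
  exact (h1.add ((hg N).const_mul_left (N : ℂ))).congr'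
    (hl.mono fun t ht => (iteratedDerivWithin_euler g N ht).symm) .rfl

theorem aeval_euler_mem {l : Filter ℝ} {hl : ∀ᶠ t in l, 0 < t} {b : ℝ} {g : SmoothPos}
    (hg : g ∈ symbols l hl b) (p : ℂ[X]) : aeval euler p g ∈ symbols l hl b := by
  induction p using Polynomial.induction_on' with
  | add p q hp hq => simpa using Submodule.add_mem _ hp hq
  | monomial n c =>
    have h : ∀ n : ℕ, (euler ^ n) g ∈ symbols l hl b := fun n => by
      induction n with
      | zero => simpa using hg
      | succ n ih => rw [pow_succ']; exact euler_mem ih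
    rw [aeval_monomial, Module.End.mul_apply, Module.algebraMap_end_apply]
    exact Submodule.smul_mem _ c (h n)

theorem eventually_pos_nhdsGT : ∀ᶠ t : ℝ in 𝓝[>] 0, 0 < t := eventually_mem_nhdsWithin

/-- Functions smooth on `(0,∞)` whose `N`-th derivative is `O(t^(-b-N))` at `0` and decays faster
than every power of `t` at `∞`, for all `N`. On this class the Mellin
transform is defined and holomorphic for `Re z > b`. -/
def mellinSpace (b : ℝ) : Set SmoothPos :=
  {g | g ∈ symbols (𝓝[>] 0) eventually_pos_nhdsGT (-b) ∧
    ∀ c, g ∈ symbols atTop (eventually_gt_atTop 0) c}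

/-! ### The Mellin transform and the Euler operator -/

section Mellin

variable {b : ℝ} {g : SmoothPos}

theorem aeval_mem_mellinSpace (hg : g ∈ mellinSpace b) (p : ℂ[X]) :
    aeval euler p g ∈ mellinSpace b :=
  ⟨aeval_euler_mem hg.1 p, fun c => aeval_euler_mem (hg.2 c) p⟩

theorem locallyIntegrableOn (g : SmoothPos) : LocallyIntegrableOn g.1 (Ioi 0) :=
  (contDiffOn g).continuousOn.locallyIntegrableOn measurableSet_Ioi

theorem isBigO_zero_of_mem (hg : g ∈ mellinSpace b) : g.1 =O[𝓝[>] 0] fun t : ℝ => t ^ (-b) := by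
  simpa using hg.1 0

theorem isBigO_top_of_mem (hg : g ∈ mellinSpace b) (c : ℝ) :
    g.1 =O[atTop] fun t : ℝ => t ^ c := by
  simpa using hg.2 c 0

theorem mellinConvergent (hg : g ∈ mellinSpace b) {z : ℂ} (hz : b < z.re) :
    MellinConvergent g.1 z :=
  mellinConvergent_of_isBigO_rpow (locallyIntegrableOn g) (isBigO_top_of_mem hg _)
    (lt_add_one z.re) (isBigO_zero_of_mem hg) hz

theorem differentiableAt_mellin (hg : g ∈ mellinSpace b) {z : ℂ} (hz : b < z.re) :
    DifferentiableAt ℂ (mellin g.1) z :=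
  mellin_differentiableAt_of_isBigO_rpow (locallyIntegrableOn g) (isBigO_top_of_mem hg _)
    (lt_add_one z.re) (isBigO_zero_of_mem hg) hz

/-- Integration by parts: under the Mellin transform, `t d/dt` becomes multiplication by `-z`. -/
theorem mellin_euler (hg : g ∈ mellinSpace b) {z : ℂ} (hz : b < z.re) :
    mellin (euler g).1 z = -z * mellin g.1 z := by
  have hu : ∀ t ∈ Ioi (0 : ℝ), HasDerivAt (fun t : ℝ => (t : ℂ) ^ z) (z * (t : ℂ) ^ (z - 1)) t :=
    fun t ht => by
      have := (hasDerivAt_id (t : ℂ)).cpow_const (c := z) (Or.inl (by simpa using ht))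
      simpa using this.comp_ofReal
  have hEg : euler g ∈ mellinSpace b := by simpa using aeval_mem_mellinSpace hg X
  have hnorm : ∀ t : ℝ, 0 < t → ‖(t : ℂ) ^ z‖ = t ^ z.re := fun t ht =>
    Complex.norm_cpow_eq_rpow_re_of_pos ht z
  have e1 : EqOn (fun t : ℝ => (t : ℂ) ^ (z - 1) • (euler g).1 t)
      (fun t : ℝ => (t : ℂ) ^ z * derivWithin g.1 (Ioi 0) t) (Ioi 0) := fun t ht => by
    have ht' : (t : ℂ) ≠ 0 := by exact_mod_cast (ne_of_gt ht)
    simp only [euler_apply g ht, smul_eq_mul]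
    rw [← mul_assoc, Complex.cpow_sub _ _ ht', Complex.cpow_one, div_mul_cancel₀ _ ht']
  have i1 := (mellinConvergent hEg hz).congr_fun e1 measurableSet_Ioi
  have i2 : IntegrableOn (fun t : ℝ => z * (t : ℂ) ^ (z - 1) * g.1 t) (Ioi 0) := by
    simpa [mul_assoc, IntegrableOn] using (mellinConvergent hg hz).const_mul z
  have l0 : Tendsto (fun t : ℝ => (t : ℂ) ^ z * g.1 t) (𝓝[>] 0) (𝓝 0) := by
    have h1 : (fun t : ℝ => (t : ℂ) ^ z) =O[𝓝[>] 0] fun t : ℝ => t ^ z.re :=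
      IsBigO.of_bound 1 (eventually_pos_nhdsGT.mono fun t ht => by
        rw [hnorm t ht, Real.norm_of_nonneg (by positivity), one_mul])
    refine ((h1.mul (isBigO_zero_of_mem hg)).congr' .rfl (eventually_pos_nhdsGT.mono fun t ht =>
      (Real.rpow_add ht _ _).symm)).trans_tendsto ?_
    have : Tendsto (fun t : ℝ => t ^ (z.re + -b)) (𝓝 0) (𝓝 (0 ^ (z.re + -b))) :=
      (Real.continuousAt_rpow_const 0 _ (Or.inr (by linarith))).tendsto
    rw [Real.zero_rpow (by linarith)] at this
    exact this.mono_left nhdsWithin_le_nhds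
  have l1 : Tendsto (fun t : ℝ => (t : ℂ) ^ z * g.1 t) atTop (𝓝 0) := by
    have h1 : (fun t : ℝ => (t : ℂ) ^ z) =O[atTop] fun t : ℝ => t ^ z.re :=
      IsBigO.of_bound 1 ((eventually_gt_atTop 0).mono fun t ht => by
        rw [hnorm t ht, Real.norm_of_nonneg (by positivity), one_mul])
    refine ((h1.mul (isBigO_top_of_mem hg (-z.re - 1))).congr' .rfl
      ((eventually_gt_atTop 0).mono fun t ht =>
      (Real.rpow_add ht _ _).symm)).trans_tendsto ?_
    simpa [show z.re + (-z.re - 1) = -1 by ring] using tendsto_rpow_neg_atTop (y := 1) one_pos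
  have := integral_Ioi_mul_deriv_eq_deriv_mul hu (fun t ht => hasDerivAt g ht) i1 i2 l0 l1
  rw [mellin, setIntegral_congr_fun measurableSet_Ioi e1, this, mellin]
  simp only [mul_assoc, integral_const_mul, smul_eq_mul]
  ring

theorem mellin_aeval_euler (hg : g ∈ mellinSpace b) {z : ℂ} (hz : b < z.re) (p : ℂ[X]) :
    mellin (aeval euler p g).1 z = p.eval (-z) * mellin g.1 z := by
  induction p using Polynomial.induction_on' with
  | add p q hp hq =>
    have := (hasMellin_add (mellinConvergent (aeval_mem_mellinSpace hg p) hz)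
      (mellinConvergent (aeval_mem_mellinSpace hg q) hz)).2
    rw [eval_add, add_mul, ← hp, ← hq, ← this, map_add]
    rfl
  | monomial n c =>
    have h : ∀ n : ℕ, mellin ((euler ^ n) g).1 z = (-z) ^ n * mellin g.1 z := fun n => by
      induction n with
      | zero => simp
      | succ n ih =>
        have hm : (euler ^ n) g ∈ mellinSpace b := by
          simpa using aeval_mem_mellinSpace hg (X ^ n)
        rw [pow_succ', Module.End.mul_apply, mellin_euler hm hz, ih]
        ring
    rw [aeval_monomial, Module.End.mul_apply, Module.algebraMap_end_apply, eval_monomial, mul_assoc,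
      ← h n]
    exact mellin_const_smul _ z c

/-- On the strip `A ≤ Re z ≤ B` one has `t^(Re z - 1) ≤ t^(A - 1) + t^(B - 1)`. -/
theorem exists_bound_mellin (hg : g ∈ mellinSpace b) {A B : ℝ} (hA : b < A) (hAB : A ≤ B) :
    ∃ C, ∀ z : ℂ, A ≤ z.re → z.re ≤ B → ‖mellin g.1 z‖ ≤ C := by
  have hintegrable : ∀ x : ℝ, b < x → IntegrableOn (fun t : ℝ => t ^ (x - 1) * ‖g.1 t‖) (Ioi 0) := by
    intro x hx
    have h : IntegrableOn _ (Ioi (0 : ℝ)) volume :=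
      (mellinConvergent hg (z := x) (by simpa using hx)).norm
    refine h.congr_fun (fun t ht => ?_) measurableSet_Ioi
    simp only [norm_smul]
    rw [Complex.norm_cpow_eq_rpow_re_of_pos ht]
    simp
  refine ⟨∫ t in Ioi (0 : ℝ), (t ^ (A - 1) * ‖g.1 t‖ + t ^ (B - 1) * ‖g.1 t‖), fun z h1 h2 => ?_⟩
  refine norm_integral_le_of_norm_le ((hintegrable A hA).add (hintegrable B (hA.trans_le hAB))) ?_
  refine (ae_restrict_mem measurableSet_Ioi).mono fun t (ht : 0 < t) => ?_
  rw [norm_smul, Complex.norm_cpow_eq_rpow_re_of_pos ht, ← add_mul]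
  refine mul_le_mul_of_nonneg_right ?_ (norm_nonneg _)
  rw [Complex.sub_re, Complex.one_re]
  rcases le_total t 1 with h | h
  · exact (Real.rpow_le_rpow_of_exponent_ge ht h (by linarith)).trans
      (le_add_of_nonneg_right (by positivity))
  · exact (Real.rpow_le_rpow_of_exponent_le h (by linarith)).trans
      (le_add_of_nonneg_left (by positivity))

end Mellin

end SmoothPos

/-! ### Terms of the expansion -/

namespace SmoothPos

theorem contDiffOn_cpow_mul_log_pow (β : ℂ) (i : ℕ) :
    ContDiffOn ℝ (⊤ : ℕ∞) (fun u : ℝ => (u : ℂ) ^ β * (Complex.ofReal (Real.log u)) ^ i)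
      (Ioi 0) := by
  have hl : ContDiffOn ℝ (⊤ : ℕ∞) (fun u : ℝ => (Real.log u : ℂ)) (Ioi 0) :=
    Complex.ofRealCLM.contDiff.comp_contDiffOn
      (Real.contDiffOn_log.mono fun x (hx : 0 < x) => hx.ne')
  have he : ContDiffOn ℝ (⊤ : ℕ∞) (fun u : ℝ => Complex.exp ((Real.log u : ℂ) * β)) (Ioi 0) :=
    Complex.contDiff_exp.comp_contDiffOn (hl.mul contDiffOn_const)
  refine ContDiffOn.mul (he.congr fun u (hu : 0 < u) => ?_) (hl.pow i)
  rw [Complex.cpow_def_of_ne_zero (by exact_mod_cast hu.ne'), Complex.ofReal_log hu.le]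

/-- The function `t ^ β * (log t) ^ i` on `(0,∞)`. -/
noncomputable def logTerm (β : ℂ) (i : ℕ) : SmoothPos := mk _ (contDiffOn_cpow_mul_log_pow β i)

theorem logTerm_apply (β : ℂ) (i : ℕ) {t : ℝ} (ht : 0 < t) :
    (logTerm β i).1 t = (t : ℂ) ^ β * (Complex.ofReal (Real.log t)) ^ i := mk_apply _ ht

/-- For `i = 0` the truncated subtraction in `i - 1` is harmless, its coefficient being `0`. -/
theorem euler_logTerm (β : ℂ) (i : ℕ) :
    euler (logTerm β i) = β • logTerm β i + (i : ℂ) • logTerm β (i - 1) := ext_pos fun t ht => by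
  have ht' : (t : ℂ) ≠ 0 := by exact_mod_cast ht.ne'
  have h1 : HasDerivAt (fun t : ℝ => (t : ℂ) ^ β) (β * (t : ℂ) ^ (β - 1)) t := by
    have := (hasDerivAt_id (t : ℂ)).cpow_const (c := β) (Or.inl (by simpa using ht))
    simpa using this.comp_ofReal
  have h2 : HasDerivAt (fun t : ℝ => (Real.log t : ℂ)) ((t⁻¹ : ℝ) : ℂ) t :=
    (Real.hasDerivAt_log ht.ne').ofReal_comp
  have h3 := (h1.mul (h2.pow i)).congr_of_eventuallyEq (f₁ := (logTerm β i).1)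
    (mem_of_superset (Ioi_mem_nhds ht) fun u hu => logTerm_apply β i hu)
  rw [euler_apply_of_hasDerivAt _ ht h3]
  simp only [Submodule.coe_add, Submodule.coe_smul, Pi.add_apply, Pi.smul_apply, smul_eq_mul,
    Pi.pow_apply]
  rw [logTerm_apply β _ ht, logTerm_apply β _ ht, Complex.cpow_sub _ _ ht', Complex.cpow_one]
  push_cast
  field_simp

/-- `θ - β` sends `t^β (log t)^i` to `i t^β (log t)^(i-1)`, so `i + 1` applications give `0`. -/
theorem aeval_euler_logTerm (β : ℂ) (i : ℕ) :
    aeval euler ((X - C β) ^ (i + 1)) (logTerm β i) = 0 := by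
  have hs : ∀ i : ℕ, aeval euler (X - C β) (logTerm β i) = (i : ℂ) • logTerm β (i - 1) := fun i => by
    rw [map_sub, aeval_X, aeval_C, LinearMap.sub_apply, Module.algebraMap_end_apply, euler_logTerm]
    abel
  induction i with
  | zero => simpa using hs 0
  | succ i ih =>
    rw [pow_succ, map_mul, Module.End.mul_apply, hs, map_smul, Nat.add_sub_cancel, ih, smul_zero]

theorem aeval_euler_logTerm_of_dvd {β : ℂ} {i : ℕ} {p : ℂ[X]} (h : (X - C β) ^ (i + 1) ∣ p) :
    aeval euler p (logTerm β i) = 0 := by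
  obtain ⟨q, rfl⟩ := h
  rw [mul_comm, map_mul, Module.End.mul_apply, aeval_euler_logTerm, map_zero]

end SmoothPos

/-! ### Annihilating the expansion -/

namespace Expansion

open SmoothPos

/-- The polynomial `∏_{j<J} (X - α_j)^(k_j+1)`; evaluated at `t d/dt` it annihilates the terms of
index `j < J` of an expansion with exponents `α` and logarithmic orders `k`. -/
noncomputable def ann (α : ℕ → ℂ) (k : ℕ → ℕ) (J : ℕ) : ℂ[X] :=
  ∏ j ∈ Finset.range J, (X - C (α j)) ^ (k j + 1)

/-- The partial sum of the terms of index `j < J` of the expansion with data `(α, k, a)`. -/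
noncomputable def partialSum (α : ℕ → ℂ) (k : ℕ → ℕ) (a : ℕ → ℕ → ℂ) (J : ℕ) : SmoothPos :=
  ∑ j ∈ Finset.range J, ∑ i ∈ Finset.range (k j + 1), a j i • logTerm (α j) i

variable {α : ℕ → ℂ} {k : ℕ → ℕ} {a : ℕ → ℕ → ℂ}

theorem partialSum_apply (J : ℕ) {t : ℝ} (ht : 0 < t) :
    (partialSum α k a J).1 t = ∑ j ∈ Finset.range J, ∑ i ∈ Finset.range (k j + 1),
      a j i * (t : ℂ) ^ (α j) * (Complex.ofReal (Real.log t)) ^ i := by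
  simp only [partialSum, Submodule.coe_sum, Finset.sum_apply, Submodule.coe_smul, Pi.smul_apply,
    logTerm_apply _ _ ht, smul_eq_mul, mul_assoc]

theorem aeval_ann_partialSum (J : ℕ) : aeval euler (ann α k J) (partialSum α k a J) = 0 := by
  rw [partialSum, map_sum]
  refine Finset.sum_eq_zero fun j hj => ?_
  rw [map_sum]
  refine Finset.sum_eq_zero fun i hi => ?_
  rw [map_smul, aeval_euler_logTerm_of_dvd, smul_zero]
  exact (pow_dvd_pow _ (Finset.mem_range.mp hi)).trans
    (Finset.dvd_prod_of_mem (fun j => (X - C (α j)) ^ (k j + 1)) hj)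

theorem isBigO_one_add_log_pow {x y : ℝ} (hxy : y < x) (n : ℕ) :
    (fun t : ℝ => t ^ x * (1 + |Real.log t| ^ n)) =O[𝓝[>] 0] fun t : ℝ => t ^ y := by
  have hneg : y - x < 0 := by linarith
  have h1 : (fun t : ℝ => |Real.log t| ^ n) =O[𝓝[>] 0] fun t : ℝ => t ^ (y - x) := by
    simpa using (isLittleO_abs_log_rpow_rpow_nhdsGT_zero (n : ℝ) hneg).isBigO
  have h0 : (fun _ : ℝ => (1 : ℝ)) =O[𝓝[>] 0] fun t : ℝ => t ^ (y - x) := by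
    simpa using (isLittleO_abs_log_rpow_rpow_nhdsGT_zero 0 hneg).isBigO
  refine ((isBigO_refl (fun t : ℝ => t ^ x) _).mul (h0.add h1)).congr' .rfl
    (eventually_pos_nhdsGT.mono fun t ht => ?_)
  simp only [← Real.rpow_add ht]
  congr 1
  ring

/-- Near `0` the partial sum may be subtracted for free, since it is annihilated; this trades the
bound on `f` for the bound on the remainder. The strict inequality absorbs the logarithms. -/
theorem aeval_ann_mem {f : ℝ → ℂ} (hf : ContDiffOn ℝ (⊤ : ℕ∞) f (Ioi 0))
    (hdecay : ∀ N : ℕ, ∃ C ε : ℝ, 0 < C ∧ 0 < ε ∧ ∀ t : ℝ, 1 ≤ t →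
      ‖iteratedDerivWithin N f (Ioi 0) t‖ ≤ C * Real.exp (-ε * t))
    (hexp : ∀ N : ℕ, ∀ j₀ : ℕ, ∃ C : ℝ, ∀ t : ℝ, 0 < t → t ≤ 1 →
      ‖iteratedDerivWithin N
          (fun u : ℝ => f u - ∑ j ∈ Finset.range j₀, ∑ i ∈ Finset.range (k j + 1),
            a j i * (u : ℂ) ^ (α j) * (Complex.ofReal (Real.log u)) ^ i)
          (Ioi 0) t‖
        ≤ C * t ^ ((α j₀).re - N) * (1 + |Real.log t| ^ (k j₀)))
    (J : ℕ) {b : ℝ} (hb : -(α J).re < b) :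
    aeval euler (ann α k J) (mk f hf) ∈ mellinSpace b := by
  refine ⟨?_, fun c => aeval_euler_mem (fun N => ?_) _⟩
  · have h : mk f hf - partialSum α k a J ∈ symbols (𝓝[>] 0) eventually_pos_nhdsGT (-b) := by
      intro N
      obtain ⟨C, hC⟩ := hexp N J
      refine IsBigO.trans (IsBigO.of_bound C ?_)
        (isBigO_one_add_log_pow (x := (α J).re - N) (by linarith) (k J))
      filter_upwards [Ioc_mem_nhdsGT one_pos] with t ht
      refine (le_of_eq ?_).trans ((hC t ht.1 ht.2).trans (le_of_eq ?_))
      · congr 1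
        refine iteratedDerivWithin_congr (fun u hu => ?_) ht.1
        rw [Submodule.coe_sub, Pi.sub_apply, mk_apply hf hu, partialSum_apply J hu]
      · have := ht.1
        rw [Real.norm_of_nonneg (by positivity), mul_assoc]
    have := aeval_euler_mem h (ann α k J)
    rwa [map_sub, aeval_ann_partialSum, sub_zero] at this
  · obtain ⟨C, ε, -, hε, h⟩ := hdecay N
    refine IsBigO.trans (IsBigO.of_bound C ?_) (isLittleO_exp_neg_mul_rpow_atTop hε (c - N)).isBigO
    filter_upwards [eventually_ge_atTop 1] with t ht
    have ht0 : t ∈ Ioi (0 : ℝ) := zero_lt_one.trans_le ht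
    have hEq : EqOn (SmoothPos.mk f hf).1 f (Ioi 0) := fun u hu => mk_apply hf hu
    rw [iteratedDerivWithin_congr hEq ht0, Real.norm_of_nonneg (by positivity)]
    exact h t ht

/-! ### Meromorphic continuation and decay -/

/-- The continuation of the Mellin transform of `g` provided by the annihilator of the first `J`
terms of its expansion. It is meaningful for `-Re α_J < Re z`; at the zeros of the
denominator it takes the value `0`. -/
noncomputable def cont (α : ℕ → ℂ) (k : ℕ → ℕ) (g : SmoothPos) (J : ℕ) (z : ℂ) : ℂ :=
  mellin (aeval euler (ann α k J) g).1 z / (ann α k J).eval (-z)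

theorem eval_ann (J : ℕ) (z : ℂ) :
    (ann α k J).eval (-z) = ∏ j ∈ Finset.range J, (-z - α j) ^ (k j + 1) := by
  simp [ann, eval_prod]

/-- The equality also holds where the denominators vanish: the extra factors of the larger one are
nonzero on the half-plane, so there both quotients are divisions by zero, with value `0`. -/
theorem cont_eq_of_le (hmono : Monotone fun j => (α j).re) {g : SmoothPos}
    (hg : ∀ J : ℕ, ∀ b : ℝ, -(α J).re < b → aeval euler (ann α k J) g ∈ mellinSpace b)
    {J J' : ℕ} (hJ : J ≤ J') {z : ℂ} (hz : -(α J).re < z.re) :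
    cont α k g J' z = cont α k g J z := by
  set q : ℂ[X] := ∏ j ∈ Finset.Ico J J', (X - C (α j)) ^ (k j + 1) with hq
  have hmul : ann α k J' = q * ann α k J := by
    rw [ann, ← Finset.prod_range_mul_prod_Ico _ hJ, mul_comm, ann]
  have hq0 : q.eval (-z) ≠ 0 := by
    rw [hq, eval_prod]
    refine Finset.prod_ne_zero_iff.mpr fun j hj => ?_
    rw [eval_pow, eval_sub, eval_X, eval_C]
    refine pow_ne_zero _ fun h => ?_
    have h1 := congrArg Complex.re h
    have h2 : (α J).re ≤ (α j).re := hmono (Finset.mem_Ico.mp hj).1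
    simp at h1
    linarith
  obtain ⟨b, hb1, hb2⟩ := exists_between hz
  rw [cont, hmul, map_mul, Module.End.mul_apply, mellin_aeval_euler (hg J b hb1) hb2, eval_mul,
    mul_div_mul_left _ _ hq0, cont]

theorem differentiableAt_cont {g : SmoothPos}
    (hg : ∀ J : ℕ, ∀ b : ℝ, -(α J).re < b → aeval euler (ann α k J) g ∈ mellinSpace b)
    {J : ℕ} {z : ℂ} (hz : -(α J).re < z.re) (h0 : (ann α k J).eval (-z) ≠ 0) :
    DifferentiableAt ℂ (cont α k g J) z := by
  obtain ⟨b, hb1, hb2⟩ := exists_between hz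
  exact (differentiableAt_mellin (hg J b hb1) hb2).div
    ((ann α k J).differentiable.differentiableAt.comp z differentiableAt_id.neg) h0

theorem isOpen_lt_re (c : ℝ) : IsOpen {z : ℂ | c < z.re} :=
  isOpen_lt continuous_const Complex.continuous_re

theorem meromorphicAt_cont {g : SmoothPos}
    (hg : ∀ J : ℕ, ∀ b : ℝ, -(α J).re < b → aeval euler (ann α k J) g ∈ mellinSpace b)
    {J : ℕ} {z : ℂ} (hz : -(α J).re < z.re) : MeromorphicAt (cont α k g J) z := by
  obtain ⟨b, hb1, hb2⟩ := exists_between hz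
  have h1 : AnalyticAt ℂ (mellin (aeval euler (ann α k J) g).1) z :=
    DifferentiableOn.analyticAt (s := {w : ℂ | b < w.re})
      (fun w hw => (differentiableAt_mellin (hg J b hb1) hw).differentiableWithinAt)
      ((isOpen_lt_re b).mem_nhds hb2)
  have h2 : AnalyticAt ℂ (fun w : ℂ => (ann α k J).eval (-w)) z :=
    Differentiable.analyticAt (f := fun w : ℂ => (ann α k J).eval (-w))
      ((ann α k J).differentiable.comp differentiable_neg) z
  exact h1.meromorphicAt.div h2.meromorphicAt

theorem exists_continuation (hmono : Monotone fun j => (α j).re)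
    (htend : Tendsto (fun j => (α j).re) atTop atTop) {g : SmoothPos}
    (hg : ∀ J : ℕ, ∀ b : ℝ, -(α J).re < b → aeval euler (ann α k J) g ∈ mellinSpace b) :
    ∃ F : ℂ → ℂ, ∀ J : ℕ, ∀ z : ℂ, -(α J).re < z.re → F z = cont α k g J z := by
  have h : ∀ z : ℂ, ∃ J : ℕ, -(α J).re < z.re := fun z =>
    ((htend.eventually_gt_atTop (-z.re)).exists).imp fun J hJ => by linarith
  choose j hj using h
  refine ⟨fun z => cont α k g (j z) z, fun J z hz => ?_⟩
  rcases le_total J (j z) with hle | hle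
  · exact cont_eq_of_le hmono hg hle hz
  · exact (cont_eq_of_le hmono hg hle (hj z)).symm

/-- Rapid decay: multiplying the transform by `(2z-1)^n` amounts to applying one more polynomial in
`t d/dt`, which preserves boundedness on vertical strips. -/
theorem exists_decay_cont {g : SmoothPos}
    (hg : ∀ J : ℕ, ∀ b : ℝ, -(α J).re < b → aeval euler (ann α k J) g ∈ mellinSpace b)
    {J : ℕ} {A B : ℝ} (hA : -(α J).re < A) (hAB : A ≤ B) (n : ℕ) :
    ∃ y C : ℝ, ∀ z : ℂ, A ≤ z.re → z.re ≤ B → y ≤ |z.im| →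
      (ann α k J).eval (-z) ≠ 0 ∧ ‖2 * z - 1‖ ^ n * ‖cont α k g J z‖ ≤ C := by
  obtain ⟨b, hb1, hb2⟩ := exists_between hA
  have hm := hg J b hb1
  obtain ⟨C', hC⟩ := exists_bound_mellin (aeval_mem_mellinSpace hm ((C (-2) * X - 1) ^ n)) hb2 hAB
  -- With this bound on `|Im z|` each factor `-z - α_j` has modulus at least `1`.
  refine ⟨∑ j ∈ Finset.range J, |(α j).im| + 1, C', fun z h1 h2 h3 => ?_⟩
  have hann : 1 ≤ ‖(ann α k J).eval (-z)‖ := by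
    rw [eval_ann, norm_prod]
    refine Finset.one_le_prod fun j hj => ?_
    rw [norm_pow]
    refine one_le_pow₀ ?_
    have e1 : |(α j).im| ≤ ∑ j ∈ Finset.range J, |(α j).im| :=
      Finset.single_le_sum (f := fun j => |(α j).im|) (fun _ _ => abs_nonneg _) hj
    have e2 := Complex.abs_im_le_norm (-z - α j)
    have e3 := abs_sub_abs_le_abs_sub (-z).im (α j).im
    rw [Complex.sub_im] at e2
    rw [Complex.neg_im, abs_neg] at e3
    rw [Complex.neg_im] at e2
    linarith
  refine ⟨fun h0 => ?_, ?_⟩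
  · rw [h0, norm_zero] at hann
    linarith
  · have := hC z h1 h2
    rw [mellin_aeval_euler hm (hb2.trans_le h1), norm_mul, eval_pow, norm_pow] at this
    have e : eval (-z) (C (-2) * X - 1) = 2 * z - 1 := by simp
    rw [e] at this
    refine le_trans ?_ this
    rw [cont, norm_div]
    gcongr
    exact div_le_self (norm_nonneg _) hann

end Expansion

end

/-- (Implication (i) ⇒ (ii) of the equivalence lemma.)
If `f : (0,∞) → ℂ` is smooth, all of whose derivatives decay exponentially at
`∞`, and admits expansion data `(α, k, a)` which can be differentiated, then
`G(s) = ∫₀^∞ t^((s-1)/2) f(t) dt` converges absolutely and is holomorphic for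
`Re s > -2 Re α₀ - 1`, and extends to a meromorphic function on `ℂ`,
holomorphic off `{-2 α j - 1 : j ∈ ℕ}`, which decays faster than any negative
power of `|s|` on finite vertical strips. -/
theorem statement7 (f : ℝ → ℂ) (hf : ContDiffOn ℝ (⊤ : ℕ∞) f (Ioi 0))
    (hdecay : ∀ N : ℕ, ∃ C ε : ℝ, 0 < C ∧ 0 < ε ∧ ∀ t : ℝ, 1 ≤ t →
      ‖iteratedDerivWithin N f (Ioi 0) t‖ ≤ C * Real.exp (-ε * t))
    (α : ℕ → ℂ) (k : ℕ → ℕ) (a : ℕ → ℕ → ℂ)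
    (hinj : Function.Injective α)
    (hmono : Monotone fun j => (α j).re)
    (htend : Tendsto (fun j => (α j).re) atTop atTop)
    (hexp : ∀ N : ℕ, ∀ j₀ : ℕ, ∃ C : ℝ, ∀ t : ℝ, 0 < t → t ≤ 1 →
      ‖iteratedDerivWithin N
          (fun u : ℝ => f u - ∑ j ∈ Finset.range j₀, ∑ i ∈ Finset.range (k j + 1),
            a j i * (u : ℂ) ^ (α j) * (Complex.ofReal (Real.log u)) ^ i)
          (Ioi 0) t‖
        ≤ C * t ^ ((α j₀).re - N) * (1 + |Real.log t| ^ (k j₀))) :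
    (∀ s : ℂ, -2 * (α 0).re - 1 < s.re →
      IntegrableOn (fun t : ℝ => (t : ℂ) ^ ((s - 1) / 2) * f t) (Ioi 0)) ∧
    DifferentiableOn ℂ
      (fun s : ℂ => ∫ t in Ioi (0 : ℝ), (t : ℂ) ^ ((s - 1) / 2) * f t)
      {s : ℂ | -2 * (α 0).re - 1 < s.re} ∧
    ∃ G : ℂ → ℂ,
      MeromorphicOn G Set.univ ∧
      (∀ s : ℂ, -2 * (α 0).re - 1 < s.re →
        G s = ∫ t in Ioi (0 : ℝ), (t : ℂ) ^ ((s - 1) / 2) * f t) ∧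
      DifferentiableOn ℂ G {s : ℂ | ∀ j : ℕ, s ≠ -2 * α j - 1} ∧
      ∀ A B : ℝ, A ≤ B → ∀ N : ℝ, 0 < N → ∃ s₀ C : ℝ, 0 < s₀ ∧ 0 < C ∧
        ∀ s : ℂ, A ≤ s.re → s.re ≤ B → s₀ ≤ |s.im| →
          DifferentiableAt ℂ G s ∧ ‖G s‖ ≤ C * ‖s‖ ^ (-N) := by
  have hg := fun J b => Expansion.aeval_ann_mem (a := a) hf hdecay hexp J (b := b)
  obtain ⟨F, hF⟩ := Expansion.exists_continuation hmono htend hg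
  have hcont0 : ∀ z : ℂ, Expansion.cont α k (SmoothPos.mk f hf) 0 z =
      mellin (SmoothPos.mk f hf).1 z := fun z => by simp [Expansion.cont, Expansion.ann]
  have hre : ∀ s : ℂ, ((s + 1) / 2).re = (s.re + 1) / 2 := fun s => by
    simp [Complex.div_ofNat_re]
  have heq : ∀ s : ℂ, EqOn (fun t : ℝ => (t : ℂ) ^ ((s + 1) / 2 - 1) • (SmoothPos.mk f hf).1 t)
      (fun t : ℝ => (t : ℂ) ^ ((s - 1) / 2) * f t) (Ioi 0) := fun s t ht => by
    simp only [smul_eq_mul]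
    rw [SmoothPos.mk_apply hf ht, show (s + 1) / 2 - 1 = (s - 1) / 2 by ring]
  have hmellin : ∀ s : ℂ, ∫ t in Ioi (0 : ℝ), (t : ℂ) ^ ((s - 1) / 2) * f t =
      mellin (SmoothPos.mk f hf).1 ((s + 1) / 2) := fun s =>
    (setIntegral_congr_fun measurableSet_Ioi (heq s)).symm
  have hmem : ∀ b : ℝ, -(α 0).re < b → SmoothPos.mk f hf ∈ SmoothPos.mellinSpace b :=
    fun b hb => by simpa [Expansion.ann] using hg 0 b hb
  have haff : ∀ s : ℂ, DifferentiableAt ℂ (fun s : ℂ => (s + 1) / 2) s := fun s => by fun_prop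
  have haffA : ∀ s : ℂ, AnalyticAt ℂ (fun s : ℂ => (s + 1) / 2) s := fun s => by fun_prop
  have hnear : ∀ J : ℕ, ∀ z : ℂ, -(α J).re < z.re →
      Expansion.cont α k (SmoothPos.mk f hf) J =ᶠ[nhds z] F := fun J z hz => by
    filter_upwards [(Expansion.isOpen_lt_re _).mem_nhds hz] with w hw using (hF J w hw).symm
  have hexists : ∀ z : ℂ, ∃ J : ℕ, -(α J).re < z.re := fun z =>
    ((htend.eventually_gt_atTop (-z.re)).exists).imp fun J hJ => by linarith
  have hdiff : ∀ J : ℕ, ∀ s : ℂ, -(α J).re < ((s + 1) / 2).re →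
      (Expansion.ann α k J).eval (-((s + 1) / 2)) ≠ 0 →
      DifferentiableAt ℂ (fun s : ℂ => F ((s + 1) / 2)) s := fun J s hs h0 =>
    DifferentiableAt.comp (g := F) s
      ((Expansion.differentiableAt_cont hg hs h0).congr_of_eventuallyEq (hnear J _ hs).symm)
      (haff s)
  refine ⟨fun s hs => ?_, fun s hs => ?_, fun s => F ((s + 1) / 2), fun s _ => ?_, fun s hs => ?_,
    fun s hs => ?_, fun A B hAB N hN => ?_⟩
  · obtain ⟨b, hb1, hb2⟩ := exists_between (show -(α 0).re < ((s + 1) / 2).re by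
      rw [hre]; linarith)
    exact IntegrableOn.congr_fun (SmoothPos.mellinConvergent (hmem b hb1) hb2) (heq s)
      measurableSet_Ioi
  · obtain ⟨b, hb1, hb2⟩ := exists_between (show -(α 0).re < ((s + 1) / 2).re by
      rw [hre]; linarith [show -2 * (α 0).re - 1 < s.re from hs])
    simp only [hmellin]
    exact ((SmoothPos.differentiableAt_mellin (hmem b hb1) hb2).comp s
      (haff s)).differentiableWithinAt
  · obtain ⟨J, hJ⟩ := hexists ((s + 1) / 2)
    have hm : MeromorphicAt F ((fun s : ℂ => (s + 1) / 2) s) :=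
      (Expansion.meromorphicAt_cont hg hJ).congr
        ((hnear J _ hJ).filter_mono nhdsWithin_le_nhds)
    exact hm.comp_analyticAt (g := fun s : ℂ => (s + 1) / 2) (haffA s)
  · rw [hmellin, ← hcont0]
    exact hF 0 _ (by rw [hre]; linarith)
  · obtain ⟨J, hJ⟩ := hexists ((s + 1) / 2)
    refine (hdiff J s hJ ?_).differentiableWithinAt
    rw [Expansion.eval_ann]
    refine Finset.prod_ne_zero_iff.mpr fun j _ => pow_ne_zero _ fun h => hs j ?_
    linear_combination -2 * h
  · obtain ⟨J, hJ⟩ : ∃ J : ℕ, -(α J).re < (A + 1) / 2 :=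
      ((htend.eventually_gt_atTop (-((A + 1) / 2))).exists).imp fun J hJ => by linarith
    obtain ⟨y, C, hC⟩ := Expansion.exists_decay_cont hg hJ (B := (B + 1) / 2) (by linarith) ⌈N⌉₊
    refine ⟨max 1 (2 * y), max 1 C, by positivity, by positivity, fun s h1 h2 h3 => ?_⟩
    have him : ((s + 1) / 2).im = s.im / 2 := by simp [Complex.div_ofNat_im]
    have hz1 : (A + 1) / 2 ≤ ((s + 1) / 2).re := by rw [hre]; linarith
    obtain ⟨h0, hle⟩ := hC ((s + 1) / 2) hz1 (by rw [hre]; linarith) (by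
      rw [him, abs_div, abs_two]
      linarith [(le_max_right 1 (2 * y)).trans h3])
    refine ⟨hdiff J s (hJ.trans_le hz1) h0, ?_⟩
    have hs1 : 1 ≤ ‖s‖ := (le_max_left 1 (2 * y)).trans (h3.trans (Complex.abs_im_le_norm s))
    have hs0 : 0 < ‖s‖ := by linarith
    rw [show 2 * ((s + 1) / 2) - 1 = s by ring, ← hF J _ (hJ.trans_le hz1)] at hle
    rw [Real.rpow_neg hs0.le, ← div_eq_mul_inv, le_div_iff₀ (by positivity), mul_comm]
    calc ‖s‖ ^ N * ‖F ((s + 1) / 2)‖ ≤ ‖s‖ ^ ⌈N⌉₊ * ‖F ((s + 1) / 2)‖ := by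
          gcongr
          rw [← Real.rpow_natCast]
          exact Real.rpow_le_rpow_of_exponent_le hs1 (Nat.le_ceil N)
      _ ≤ max 1 C := hle.trans (le_max_right _ _)
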